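/- For all integers p ≥ 1, q ≥ 2 with m = pq, and all integers j with 1 ≤ j ≤ p−1 and 2j ≠ p, the R-submodule of S/(z) generated by the residue classes of the four monomials x^{jq}, y^{jq}, x^{m−jq}, y^{m−jq} is isomorphic, as an R-module, to the direct sum of two copies of Coker([[XY, −2X^{p−j+1}],[−2X^{j+1}, XY]]). -/

import Mathlib

/-!
Write `k = p - j`, so that `m - jq = kq`. In `S/(z)` one has `xy·x^m = xy·y^m`, which gives
`XY·x^{jq} = 2X^{j+1} y^{kq}` and `XY·y^{kq} = 2X^{k+1} x^{jq}`: the pair `(x^{jq}, y^{kq})`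
satisfies the relations given by the columns of the matrix, and so does `(y^{jq}, x^{kq})`.

That there are no further relations is checked on `ℂ`-points. A relation `F₁ x^{jq} + F₂ y^{kq} +
G₁ y^{jq} + G₂ x^{kq} ∈ (z)` vanishes wherever `z` does; with `u = x^q`, `v = y^q` this is the
locus `uv(u^p - v^p) = 0`. The substitution `(u, v) ↦ (θu, θ⁻¹v)`, `θ` a primitive `p`-th root of
unity, fixes the values of `X` and `Y` and multiplies the two halves of the relation by `θ^j` and
`θ^{-j}`, which differ because `2j ≠ p`; so each half vanishes separately (`separate`).
For one half, the lines `v = 0` and `u = 0` show `X ∣ F₁` and `X ∣ F₂`. After division by `X` the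
columns become those of `Y - N` with `N` a matrix over `ℂ[X]`, so modulo them any pair is congruent
to a pair `(α(X), β(X))` (`reduce_pair`), and the points `(u, v) = (ts, ts⁻¹)` with `s = 1` and
with `s^p = -1` force `α = β = 0` (`mem_of_vanish`).
-/
open MvPolynomial

noncomputable section

/-- `S = ℂ[x,y]` -/
abbrev Spoly : Type := MvPolynomial Bool ℂ

/-- `R = ℂ[X,Y]` -/
abbrev Rpoly : Type := MvPolynomial (Fin 2) ℂ

def xv : Spoly := X false
def yv : Spoly := X true
def Xv : Rpoly := X 0
def Yv : Rpoly := X 1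

/-- The map `R → S`, `X ↦ (xy)^q`, `Y ↦ x^m + y^m`. -/
def phi (m q : ℕ) : Rpoly →+* Spoly :=
  (aeval ![(xv * yv) ^ q, xv ^ m + yv ^ m]).toRingHom

/-- `z = xy(x^m - y^m)`. -/
def zpol (m : ℕ) : Spoly := xv * yv * (xv ^ m - yv ^ m)

/-- Cokernel of a 2×2 matrix over `R`. -/
abbrev coker (A : Matrix (Fin 2) (Fin 2) Rpoly) : Type :=
  (Fin 2 → Rpoly) ⧸ LinearMap.range A.mulVecLin

/-- The value at `(a, b)` of a polynomial in `X, Y`. -/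
def ev (a b : ℂ) : Rpoly →ₐ[ℂ] ℂ := aeval ![a, b]

@[simp] lemma ev_X (a b : ℂ) : ev a b Xv = a := by simp [ev, Xv]

@[simp] lemma ev_Y (a b : ℂ) : ev a b Yv = b := by simp [ev, Yv]

lemma poly_zero_of_ne {α : Polynomial ℂ} (h : ∀ x : ℂ, x ≠ 0 → α.eval x = 0) : α = 0 := by
  apply Polynomial.eq_zero_of_infinite_isRoot
  refine Set.Infinite.mono (s := {0}ᶜ) (fun x hx => h x hx) ?_
  exact (Set.finite_singleton (0 : ℂ)).infinite_compl

lemma ev_aeval (a b : ℂ) (α : Polynomial ℂ) (r : Rpoly) :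
    ev a b (Polynomial.aeval r α) = α.eval (ev a b r) := by
  rw [← Polynomial.aeval_algHom_apply, Polynomial.coe_aeval_eq_eval]

/-- Division with remainder by `X`. -/
lemma split_X (F : Rpoly) : ∃ (G : Rpoly) (γ : Polynomial ℂ),
    F = Xv * G + Polynomial.aeval Yv γ := by
  induction F using MvPolynomial.induction_on with
  | C a => exact ⟨0, Polynomial.C a, by simp [MvPolynomial.algebraMap_eq]⟩
  | add f g hf hg =>
    obtain ⟨G, γ, h⟩ := hf
    obtain ⟨G', γ', h'⟩ := hg
    exact ⟨G + G', γ + γ', by rw [h, h', map_add]; ring⟩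
  | mul_X f i hf =>
    obtain ⟨G, γ, h⟩ := hf
    fin_cases i
    · exact ⟨f, 0, by simp [Xv, mul_comm]⟩
    · refine ⟨G * Yv, γ * Polynomial.X, ?_⟩
      rw [h, map_mul, Polynomial.aeval_X]
      simp only [Yv, Fin.mk_one]
      ring

lemma X_dvd (F : Rpoly) (h : ∀ b : ℂ, b ≠ 0 → ev 0 b F = 0) : ∃ G, F = Xv * G := by
  obtain ⟨G, γ, rfl⟩ := split_X F
  have : γ = 0 := poly_zero_of_ne fun b hb => by
    have := h b hb
    simpa [ev_aeval] using this
  exact ⟨G, by simp [this]⟩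

/-- The relations `Y e₁ = 2X^j e₂` and `Y e₂ = 2X^k e₁` eliminate `Y` from any pair. -/
lemma reduce_pair (j k : ℕ) (F G : Rpoly) : ∃ (r s : Rpoly) (α β : Polynomial ℂ),
    F = Polynomial.aeval Xv α + Yv * r - 2 * Xv ^ k * s ∧
    G = Polynomial.aeval Xv β - 2 * Xv ^ j * r + Yv * s := by
  have key1 : ∀ F : Rpoly, ∃ (r s : Rpoly) (α β : Polynomial ℂ),
      F = Polynomial.aeval Xv α + Yv * r - 2 * Xv ^ k * s ∧
      0 = Polynomial.aeval Xv β - 2 * Xv ^ j * r + Yv * s := by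
    intro F
    induction F using MvPolynomial.induction_on with
    | C a => exact ⟨0, 0, Polynomial.C a, 0, by simp [MvPolynomial.algebraMap_eq], by simp⟩
    | add f g hf hg =>
      obtain ⟨r, s, α, β, h, h'⟩ := hf
      obtain ⟨r', s', α', β', e, e'⟩ := hg
      refine ⟨r + r', s + s', α + α', β + β', ?_, ?_⟩
      · rw [h, e, map_add]; ring
      · rw [map_add]; linear_combination h' + e'
    | mul_X f i hf =>
      -- For `Y`: `Y(α, β) = (2X^k β, 2X^j α) + α (Y, -2X^j) + β (-2X^k, Y)`.
      obtain ⟨r, s, α, β, h, h'⟩ := hf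
      fin_cases i
      · refine ⟨r * Xv, s * Xv, α * Polynomial.X, β * Polynomial.X, ?_, ?_⟩
        · rw [h, map_mul, Polynomial.aeval_X]; simp only [Xv, Fin.zero_eta]; ring
        · rw [map_mul, Polynomial.aeval_X]; linear_combination h' * Xv
      · refine ⟨r * Yv + Polynomial.aeval Xv α, s * Yv + Polynomial.aeval Xv β,
          2 * Polynomial.X ^ k * β, 2 * Polynomial.X ^ j * α, ?_, ?_⟩
        · rw [h]
          simp only [map_mul, map_pow, Polynomial.aeval_X, map_ofNat, Yv, Fin.mk_one]; ring
        · simp only [map_mul, map_pow, Polynomial.aeval_X, map_ofNat]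
          linear_combination Yv * h'
  have key2 : ∀ G : Rpoly, ∃ (r s : Rpoly) (α β : Polynomial ℂ),
      0 = Polynomial.aeval Xv α + Yv * r - 2 * Xv ^ k * s ∧
      G = Polynomial.aeval Xv β - 2 * Xv ^ j * r + Yv * s := by
    intro G
    induction G using MvPolynomial.induction_on with
    | C a => exact ⟨0, 0, 0, Polynomial.C a, by simp, by simp [MvPolynomial.algebraMap_eq]⟩
    | add f g hf hg =>
      obtain ⟨r, s, α, β, h, h'⟩ := hf
      obtain ⟨r', s', α', β', e, e'⟩ := hg
      refine ⟨r + r', s + s', α + α', β + β', ?_, ?_⟩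
      · rw [map_add]; linear_combination h + e
      · rw [h', e', map_add]; ring
    | mul_X f i hf =>
      obtain ⟨r, s, α, β, h, h'⟩ := hf
      fin_cases i
      · refine ⟨r * Xv, s * Xv, α * Polynomial.X, β * Polynomial.X, ?_, ?_⟩
        · rw [map_mul, Polynomial.aeval_X]; linear_combination Xv * h
        · rw [h', map_mul, Polynomial.aeval_X]; simp only [Xv, Fin.zero_eta]; ring
      · refine ⟨r * Yv + Polynomial.aeval Xv α, s * Yv + Polynomial.aeval Xv β,
          2 * Polynomial.X ^ k * β, 2 * Polynomial.X ^ j * α, ?_, ?_⟩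
        · simp only [map_mul, map_pow, Polynomial.aeval_X, map_ofNat]
          linear_combination Yv * h
        · rw [h']
          simp only [map_mul, map_pow, Polynomial.aeval_X, map_ofNat, Yv, Fin.mk_one]; ring
  obtain ⟨r, s, α, β, h, h₂⟩ := key1 F
  obtain ⟨r', s', α', β', e, e₂⟩ := key2 G
  refine ⟨r + r', s + s', α + α', β + β', ?_, ?_⟩
  · rw [map_add]; linear_combination h + e
  · rw [map_add]; linear_combination h₂ + e₂

/-- Membership in the column space of the matrix of the theorem, with `k = p - j`. -/
lemma mem_range_iff (j k : ℕ) (F : Fin 2 → Rpoly) :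
    F ∈ LinearMap.range (!![Xv * Yv, -2 * Xv ^ (k + 1); -2 * Xv ^ (j + 1), Xv * Yv]).mulVecLin ↔
    ∃ r s : Rpoly, F 0 = Xv * Yv * r - 2 * Xv ^ (k + 1) * s ∧
      F 1 = -2 * Xv ^ (j + 1) * r + Xv * Yv * s := by
  constructor
  · rintro ⟨w, rfl⟩
    refine ⟨w 0, w 1, ?_, ?_⟩
    · simp [Matrix.mulVec, dotProduct, Fin.sum_univ_two]; ring
    · simp [Matrix.mulVec, dotProduct, Fin.sum_univ_two]
  · rintro ⟨r, s, h0, h1⟩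
    refine ⟨![r, s], ?_⟩
    ext1 i
    fin_cases i
    · simp [Matrix.mulVec, dotProduct, Fin.sum_univ_two, h0]; ring
    · simp [Matrix.mulVec, dotProduct, Fin.sum_univ_two, h1]

/-- A relation between `u^j` and `v^k` that holds on the curve `uv(u^p - v^p) = 0`, `p = j + k`,
is a combination of the two standard ones. -/
lemma mem_of_vanish (j k : ℕ) (hj : 1 ≤ j) (hk : 1 ≤ k) (F G : Rpoly)
    (h : ∀ u v : ℂ, u * v * (u ^ (j + k) - v ^ (j + k)) = 0 →
      ev (u * v) (u ^ (j + k) + v ^ (j + k)) F * u ^ j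
      + ev (u * v) (u ^ (j + k) + v ^ (j + k)) G * v ^ k = 0) :
    ∃ r s : Rpoly, F = Xv * Yv * r - 2 * Xv ^ (k + 1) * s ∧
      G = -2 * Xv ^ (j + 1) * r + Xv * Yv * s := by
  have hp : j + k ≠ 0 := by omega
  have hj0 : j ≠ 0 := by omega
  have hk0 : k ≠ 0 := by omega
  obtain ⟨F', rfl⟩ : ∃ F', F = Xv * F' := X_dvd F fun b hb => by
    obtain ⟨u, rfl⟩ := IsAlgClosed.exists_pow_nat_eq b (Nat.pos_of_ne_zero hp)
    have hu : u ≠ 0 := by rintro rfl; exact hb (zero_pow hp)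
    have := h u 0 (by ring)
    simpa [hp, hk0, hu] using this
  obtain ⟨G', rfl⟩ : ∃ G', G = Xv * G' := X_dvd G fun b hb => by
    obtain ⟨v, rfl⟩ := IsAlgClosed.exists_pow_nat_eq b (Nat.pos_of_ne_zero hp)
    have hv : v ≠ 0 := by rintro rfl; exact hb (zero_pow hp)
    have := h 0 v (by ring)
    simpa [hp, hj0, hv] using this
  obtain ⟨r, s, α, β, hF, hG⟩ := reduce_pair j k F' G'
  obtain ⟨s₀, hs₀⟩ := IsAlgClosed.exists_pow_nat_eq (-1 : ℂ) (Nat.pos_of_ne_zero hp)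
  have hs₀0 : s₀ ≠ 0 := by rintro rfl; rw [zero_pow hp] at hs₀; norm_num at hs₀
  -- On the curve only the `(α, β)`-part of the reduced relation survives.
  have main : ∀ u v : ℂ, u ≠ 0 → v ≠ 0 → u ^ (j + k) = v ^ (j + k) →
      α.eval (u * v) * u ^ j + β.eval (u * v) * v ^ k = 0 := by
    intro u v hu hv huv
    have h1 := h u v (by rw [huv]; ring)
    rw [hF, hG] at h1
    simp only [map_mul, map_add, map_sub, map_pow, ev_X, ev_Y, ev_aeval, map_ofNat] at h1
    have huv0 : u * v ≠ 0 := mul_ne_zero hu hv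
    apply mul_left_cancel₀ huv0
    have e1 : u ^ j * u ^ k = v ^ j * v ^ k := by rw [← pow_add, ← pow_add, huv]
    rw [mul_zero, ← h1]
    simp only [pow_add, mul_pow]
    set a := ev (u * v) (u ^ j * u ^ k + v ^ j * v ^ k) r
    set b := ev (u * v) (u ^ j * u ^ k + v ^ j * v ^ k) s
    linear_combination (u * v) * (v ^ k * b - u ^ j * a) * e1
  have sq : ∀ t : ℂ, t ≠ 0 → α.eval (t * t) = 0 ∧ β.eval (t * t) = 0 := by
    intro t ht
    have h1 := main t t ht ht rfl
    have h2 := main (t * s₀) (t * s₀⁻¹) (by positivity) (by positivity)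
      (by rw [mul_pow, mul_pow, inv_pow, hs₀]; norm_num)
    have e : t * s₀ * (t * s₀⁻¹) = t * t := by field_simp
    rw [e, mul_pow, mul_pow] at h2
    have e2 : s₀⁻¹ ^ k = - s₀ ^ j := by
      rw [inv_pow, inv_eq_iff_eq_inv, ← neg_inv]
      have : s₀ ^ j * s₀ ^ k = -1 := by rw [← pow_add, hs₀]
      field_simp
      linear_combination this
    rw [e2] at h2
    have h3 : s₀ ^ j * (α.eval (t * t) * t ^ j - β.eval (t * t) * t ^ k) = 0 := by
      linear_combination h2
    have h4 := (mul_eq_zero.1 h3).resolve_left (pow_ne_zero _ hs₀0)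
    constructor
    · apply mul_right_cancel₀ (pow_ne_zero j ht)
      linear_combination (h1 + h4) / 2
    · apply mul_right_cancel₀ (pow_ne_zero k ht)
      linear_combination (h1 - h4) / 2
  have sq' : ∀ x : ℂ, x ≠ 0 → α.eval x = 0 ∧ β.eval x = 0 := by
    intro x hx
    obtain ⟨t, rfl⟩ := IsAlgClosed.exists_eq_mul_self x
    exact sq t (by rintro rfl; simp at hx)
  have hα : α = 0 := poly_zero_of_ne fun x hx => (sq' x hx).1
  have hβ : β = 0 := poly_zero_of_ne fun x hx => (sq' x hx).2
  refine ⟨r, s, ?_, ?_⟩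
  · rw [hF, hα, map_zero]; ring
  · rw [hG, hβ, map_zero]; ring

/-- The two isotypic halves of a relation on the curve `uv(u^p - v^p) = 0` vanish separately. -/
lemma separate (j k : ℕ) (hj : 1 ≤ j) (hk : 1 ≤ k) (hjk : j ≠ k) (F₁ F₂ G₁ G₂ : Rpoly)
    (h : ∀ u v : ℂ, u * v * (u ^ (j + k) - v ^ (j + k)) = 0 →
      ev (u * v) (u ^ (j + k) + v ^ (j + k)) F₁ * u ^ j
      + ev (u * v) (u ^ (j + k) + v ^ (j + k)) F₂ * v ^ k
      + ev (u * v) (u ^ (j + k) + v ^ (j + k)) G₁ * v ^ j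
      + ev (u * v) (u ^ (j + k) + v ^ (j + k)) G₂ * u ^ k = 0)
    (u v : ℂ) (huv : u * v * (u ^ (j + k) - v ^ (j + k)) = 0) :
    (ev (u * v) (u ^ (j + k) + v ^ (j + k)) F₁ * u ^ j
      + ev (u * v) (u ^ (j + k) + v ^ (j + k)) F₂ * v ^ k = 0) ∧
    (ev (u * v) (u ^ (j + k) + v ^ (j + k)) G₁ * v ^ j
      + ev (u * v) (u ^ (j + k) + v ^ (j + k)) G₂ * u ^ k = 0) := by
  have hp : j + k ≠ 0 := by omega
  have hθ := Complex.isPrimitiveRoot_exp (j + k) hp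
  set θ := Complex.exp (2 * Real.pi * Complex.I / ((j + k : ℕ) : ℂ))
  have hθ0 : θ ≠ 0 := Complex.exp_ne_zero _
  have hθp : θ ^ (j + k) = 1 := hθ.pow_eq_one
  have hθ2 : θ ^ (2 * j) ≠ 1 := by
    intro e
    obtain ⟨c, hc⟩ := (hθ.pow_eq_one_iff_dvd _).1 e
    have : c = 1 := by
      have h1 : c < 2 := by
        by_contra! hc2
        nlinarith
      have h2 : c ≠ 0 := by rintro rfl; omega
      omega
    subst this
    omega
  have h1 := h u v huv
  have eu : (θ * u) ^ (j + k) = u ^ (j + k) := by rw [mul_pow, hθp, one_mul]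
  have ev' : (θ⁻¹ * v) ^ (j + k) = v ^ (j + k) := by rw [mul_pow, inv_pow, hθp]; simp
  have e : θ * u * (θ⁻¹ * v) = u * v := by field_simp
  have h2 := h (θ * u) (θ⁻¹ * v) (by rw [eu, ev', e, huv])
  rw [eu, ev', e] at h2
  set a := ev (u * v) (u ^ (j + k) + v ^ (j + k)) F₁
  set b := ev (u * v) (u ^ (j + k) + v ^ (j + k)) F₂
  set c := ev (u * v) (u ^ (j + k) + v ^ (j + k)) G₁
  set d := ev (u * v) (u ^ (j + k) + v ^ (j + k)) G₂
  have ek : θ⁻¹ ^ k = θ ^ j := by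
    rw [inv_pow]
    exact inv_eq_of_mul_eq_one_left (by rw [← pow_add, hθp])
  have ej : θ ^ j * θ⁻¹ ^ j = 1 := by rw [← mul_pow, mul_inv_cancel₀ hθ0, one_pow]
  have ek' : θ ^ j * θ ^ k = 1 := by rw [← pow_add, hθp]
  rw [mul_pow, mul_pow, mul_pow, mul_pow, ek] at h2
  have e3 : (θ ^ (2 * j) - 1) * (a * u ^ j + b * v ^ k) = 0 := by
    have : θ ^ (2 * j) = θ ^ j * θ ^ j := by rw [two_mul, pow_add]
    rw [this]
    linear_combination θ ^ j * h2 - h1 - c * v ^ j * ej - d * u ^ k * ek'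
  have e4 := (mul_eq_zero.1 e3).resolve_left (sub_ne_zero.2 hθ2)
  exact ⟨e4, by linear_combination h1 - e4⟩

/-- A module generated by two pairs of elements whose only relations are those in `P` for each
pair is the direct sum of two copies of `R²/P`. -/
lemma span_equiv {A N : Type*} [CommRing A] [AddCommGroup N] [Module A N]
    (P : Submodule A (Fin 2 → A)) (a b c d : N)
    (h : ∀ F G : Fin 2 → A, F 0 • a + F 1 • d + (G 0 • b + G 1 • c) = 0 ↔ F ∈ P ∧ G ∈ P) :
    Nonempty (Submodule.span A {a, b, c, d} ≃ₗ[A]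
      ((Fin 2 → A) ⧸ P) × ((Fin 2 → A) ⧸ P)) := by
  set L₁ := Fintype.linearCombination A ![a, d] with hL₁
  set L₂ := Fintype.linearCombination A ![b, c] with hL₂
  have e₁ : ∀ F, L₁ F = F 0 • a + F 1 • d := fun F => by
    simp [hL₁, Fintype.linearCombination_apply, Fin.sum_univ_two]
  have e₂ : ∀ F, L₂ F = F 0 • b + F 1 • c := fun F => by
    simp [hL₂, Fintype.linearCombination_apply, Fin.sum_univ_two]
  have h₁ : P ≤ LinearMap.ker L₁ := fun F hF => by
    have := (h F 0).2 ⟨hF, P.zero_mem⟩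
    simpa [e₁] using this
  have h₂ : P ≤ LinearMap.ker L₂ := fun F hF => by
    have := (h 0 F).2 ⟨P.zero_mem, hF⟩
    simpa [e₂] using this
  set ψ := LinearMap.coprod (P.liftQ L₁ h₁) (P.liftQ L₂ h₂) with hψ
  have hinj : Function.Injective ψ := by
    rw [← LinearMap.ker_eq_bot, LinearMap.ker_eq_bot']
    rintro ⟨F, G⟩ hFG
    obtain ⟨F, rfl⟩ := P.mkQ_surjective F
    obtain ⟨G, rfl⟩ := P.mkQ_surjective G
    have : L₁ F + L₂ G = 0 := by simpa [hψ] using hFG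
    rw [e₁, e₂, h] at this
    simpa using this
  have hrange : LinearMap.range ψ = Submodule.span A {a, b, c, d} := by
    rw [hψ, LinearMap.range_coprod, Submodule.range_liftQ, Submodule.range_liftQ, hL₁, hL₂,
      Fintype.range_linearCombination, Fintype.range_linearCombination, ← Submodule.span_union]
    congr 1
    ext t
    simp
    tauto
  exact ⟨((LinearEquiv.ofInjective ψ hinj).trans (LinearEquiv.ofEq _ _ hrange)).symm⟩

lemma phi_X (m q : ℕ) : phi m q Xv = (xv * yv) ^ q := by simp [phi, Xv]

lemma phi_Y (m q : ℕ) : phi m q Yv = xv ^ m + yv ^ m := by simp [phi, Yv]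

/-- The value at `(a, b)` of a polynomial in `x, y`. -/
def evS (a b : ℂ) : Spoly →ₐ[ℂ] ℂ := aeval (fun i => if i then b else a)

@[simp] lemma evS_x (a b : ℂ) : evS a b xv = a := by simp [evS, xv]

@[simp] lemma evS_y (a b : ℂ) : evS a b yv = b := by simp [evS, yv]

lemma evS_phi (m q : ℕ) (a b : ℂ) (F : Rpoly) :
    evS a b (phi m q F) = ev ((a * b) ^ q) (a ^ m + b ^ m) F := by
  have : (evS a b).comp (aeval ![(xv * yv) ^ q, xv ^ m + yv ^ m]) =
      ev ((a * b) ^ q) (a ^ m + b ^ m) := by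
    apply MvPolynomial.algHom_ext
    intro i
    fin_cases i <;> simp [ev]
  exact DFunLike.congr_fun this F

/-- The relations among the four monomials modulo `z`, for `p = j + k`. -/
lemma relation_iff (j k q : ℕ) (hj : 1 ≤ j) (hk : 1 ≤ k) (hjk : j ≠ k) (hq : 2 ≤ q)
    (F G : Fin 2 → Rpoly) :
    zpol ((j + k) * q) ∣
      phi ((j + k) * q) q (F 0) * xv ^ (j * q) + phi ((j + k) * q) q (F 1) * yv ^ (k * q)
      + (phi ((j + k) * q) q (G 0) * yv ^ (j * q) + phi ((j + k) * q) q (G 1) * xv ^ (k * q)) ↔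
    (F ∈ LinearMap.range
        (!![Xv * Yv, -2 * Xv ^ (k + 1); -2 * Xv ^ (j + 1), Xv * Yv]).mulVecLin ∧
     G ∈ LinearMap.range
        (!![Xv * Yv, -2 * Xv ^ (k + 1); -2 * Xv ^ (j + 1), Xv * Yv]).mulVecLin) := by
  rw [mem_range_iff, mem_range_iff]
  constructor
  · rintro ⟨w, hw⟩
    have h : ∀ u v : ℂ, u * v * (u ^ (j + k) - v ^ (j + k)) = 0 →
      ev (u * v) (u ^ (j + k) + v ^ (j + k)) (F 0) * u ^ j
      + ev (u * v) (u ^ (j + k) + v ^ (j + k)) (F 1) * v ^ k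
      + ev (u * v) (u ^ (j + k) + v ^ (j + k)) (G 0) * v ^ j
      + ev (u * v) (u ^ (j + k) + v ^ (j + k)) (G 1) * u ^ k = 0 := by
      intro u v huv
      have hq0 : 0 < q := by omega
      obtain ⟨a, rfl⟩ := IsAlgClosed.exists_pow_nat_eq u hq0
      obtain ⟨b, rfl⟩ := IsAlgClosed.exists_pow_nat_eq v hq0
      have hz : a * b * (a ^ ((j + k) * q) - b ^ ((j + k) * q)) = 0 := by
        rw [mul_comm (j + k) q, pow_mul, pow_mul]
        rcases mul_eq_zero.1 huv with h0 | h0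
        · rw [← mul_pow] at h0
          rw [eq_zero_of_pow_eq_zero h0, zero_mul]
        · rw [h0, mul_zero]
      have h1 := congrArg (evS a b) hw
      simp only [zpol, map_mul, map_add, map_sub, map_pow, evS_phi, evS_x, evS_y, hz, zero_mul]
        at h1
      simp only [← pow_mul, ← mul_pow, mul_comm q]
      linear_combination h1
    have hs := separate j k hj hk hjk _ _ _ _ h
    refine ⟨mem_of_vanish j k hj hk _ _ fun u v huv => (hs u v huv).1,
      mem_of_vanish j k hj hk _ _ fun u v huv => ?_⟩
    -- The second half is the first one with `u` and `v` exchanged.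
    have := (hs v u (by linear_combination -huv)).2
    rwa [mul_comm v u, add_comm (v ^ (j + k))] at this
  · rintro ⟨⟨r, s, h0, h1⟩, ⟨r', s', h0', h1'⟩⟩
    obtain ⟨n, rfl⟩ : ∃ n, q = n + 1 := ⟨q - 1, by omega⟩
    rw [h0, h1, h0', h1']
    set m := (j + k) * (n + 1) with hm
    refine ⟨(xv * yv) ^ n * (phi m (n + 1) r * xv ^ (j * (n + 1))
      - phi m (n + 1) s * yv ^ (k * (n + 1)) - phi m (n + 1) r' * yv ^ (j * (n + 1))
      + phi m (n + 1) s' * xv ^ (k * (n + 1))), ?_⟩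
    simp only [map_mul, map_add, map_sub, map_neg, map_pow, phi_X, phi_Y, map_ofNat, zpol]
    have ex : xv ^ m = xv ^ (j * (n + 1)) * xv ^ (k * (n + 1)) := by rw [hm, ← pow_add]; ring
    have ey : yv ^ m = yv ^ (j * (n + 1)) * yv ^ (k * (n + 1)) := by rw [hm, ← pow_add]; ring
    have e : ∀ i : ℕ, ((xv * yv) ^ (n + 1)) ^ (i + 1)
        = xv * yv * (xv * yv) ^ n * xv ^ (i * (n + 1)) * yv ^ (i * (n + 1)) := by
      intro i
      rw [← pow_mul, mul_assoc _ (xv ^ _), ← mul_pow]; ring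
    rw [ex, ey, e, e, pow_succ (xv * yv) n]
    ring

theorem stmt6 (p q : ℕ) (hp : 1 ≤ p) (hq : 2 ≤ q) (j : ℕ)
    (hj1 : 1 ≤ j) (hjp : j ≤ p - 1) (hmid : 2 * j ≠ p) :
    letI : Module Rpoly (Spoly ⧸ Ideal.span {zpol (p * q)}) :=
      ((Ideal.Quotient.mk (Ideal.span {zpol (p * q)})).comp (phi (p * q) q)).toModule
    let M : Submodule Rpoly (Spoly ⧸ Ideal.span {zpol (p * q)}) :=
      Submodule.span Rpoly
        {Ideal.Quotient.mk (Ideal.span {zpol (p * q)}) (xv ^ (j * q)),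
         Ideal.Quotient.mk (Ideal.span {zpol (p * q)}) (yv ^ (j * q)),
         Ideal.Quotient.mk (Ideal.span {zpol (p * q)}) (xv ^ (p * q - j * q)),
         Ideal.Quotient.mk (Ideal.span {zpol (p * q)}) (yv ^ (p * q - j * q))}
    Nonempty (M ≃ₗ[Rpoly]
      (coker !![Xv * Yv, -2 * Xv ^ (p - j + 1); -2 * Xv ^ (j + 1), Xv * Yv]) ×
      (coker !![Xv * Yv, -2 * Xv ^ (p - j + 1); -2 * Xv ^ (j + 1), Xv * Yv])) := by
  obtain ⟨k, rfl⟩ : ∃ k, p = j + k := ⟨p - j, by omega⟩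
  have ek : j + k - j = k := by omega
  have em : (j + k) * q - j * q = k * q := by rw [add_mul]; omega
  rw [ek, em]
  intro M
  let inst : Module Rpoly (Spoly ⧸ Ideal.span {zpol ((j + k) * q)}) :=
    ((Ideal.Quotient.mk (Ideal.span {zpol ((j + k) * q)})).comp (phi ((j + k) * q) q)).toModule
  refine @span_equiv Rpoly (Spoly ⧸ Ideal.span {zpol ((j + k) * q)}) _ _ inst _ _ _ _ _ ?_
  intro F G
  rw [← relation_iff j k q hj1 (by omega) (by omega) hq F G, ← Ideal.mem_span_singleton,
    ← Ideal.Quotient.eq_zero_iff_mem]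
  rfl
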